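/- Let C be a category with an initial object and colimits of chains, and let F : C → C be an ω-cocontinuous endofunctor. Then the category of F-algebras has an initial object, i.e., F has an initial algebra (whose structure morphism is moreover an isomorphism). -/

import Mathlib

/-!
Let `L` be the colimit of the chain `0 ⟶ F 0 ⟶ F² 0 ⟶ ⋯`, with coprojections `ι n`. Since `F`
preserves this colimit, the maps `F.map (ι n)` exhibit `F L` as a colimit, so there is a unique
`str : F L ⟶ L` with `F.map (ι n) ≫ str = ι (n + 1)` (`map_ι_str`).

For an algebra `B`, a map `g : L ⟶ B` is a morphism of algebras if and only if
`ι (n + 1) ≫ g = F.map (ι n ≫ g) ≫ B.str` for all `n`. As `ι 0 ≫ g` is a map out of the initial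
object, this recursion determines all the components `ι n ≫ g`, and conversely the family it
defines (`leg`) is a cocone on the chain. Hence there is exactly one morphism `L ⟶ B`.
The invertibility of the structure map is Lambek's lemma, which Mathlib provides.
-/

open CategoryTheory CategoryTheory.Limits

universe v u

namespace Adamek

variable {C : Type u} [Category.{v} C]

/-- A cocone over a chain, built from legs that are compatible with the successor maps. -/
def coconeOfSucc (G : ℕ ⥤ C) (X : C) (f : ∀ n, G.obj n ⟶ X)
    (hf : ∀ n, G.map (homOfLE (Nat.le_add_right n 1)) ≫ f (n + 1) = f n) : Cocone G where
  pt := X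
  ι := NatTrans.ofSequence f fun n => by simp [hf]

variable [HasInitial C] (F : C ⥤ C)

/-- The iterates `Fⁿ(0)` of `F` on the initial object. -/
noncomputable def iter : ℕ → C
  | 0 => ⊥_ C
  | n + 1 => F.obj (iter n)

/-- The connecting maps `Fⁿ(0) ⟶ Fⁿ⁺¹(0)`, namely `Fⁿ` applied to the unique map `0 ⟶ F(0)`. -/
noncomputable def step : ∀ n, iter F n ⟶ iter F (n + 1)
  | 0 => initial.to _
  | n + 1 => F.map (step n)

/-- The initial chain `0 ⟶ F(0) ⟶ F²(0) ⟶ ⋯`. -/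
noncomputable def chain : ℕ ⥤ C := Functor.ofSequence (step F)

lemma chain_map_succ (n : ℕ) :
    (chain F).map (homOfLE (Nat.le_add_right n 1)) = step F n :=
  Functor.ofSequence_map_homOfLE_succ _ n

lemma iter_zero_hom_ext {X : C} (f g : iter F 0 ⟶ X) : f = g :=
  initialIsInitial.hom_ext f g

variable {F} in
/-- The canonical maps `Fⁿ(0) ⟶ B` into the carrier of an algebra `B`. -/
noncomputable def leg (B : Endofunctor.Algebra F) : ∀ n, iter F n ⟶ B.a
  | 0 => initial.to _
  | n + 1 => F.map (leg B n) ≫ B.str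

variable {F} in
lemma step_leg (B : Endofunctor.Algebra F) (n : ℕ) : step F n ≫ leg B (n + 1) = leg B n := by
  induction n with
  | zero => exact iter_zero_hom_ext F _ _
  | succ n ih =>
    change F.map (step F n) ≫ F.map (leg B (n + 1)) ≫ B.str = F.map (leg B n) ≫ B.str
    rw [← Functor.map_comp_assoc, ih]

variable [HasColimitsOfShape ℕ C]

/-- The coprojections `Fⁿ(0) ⟶ L` into the colimit `L` of the initial chain. -/
noncomputable def ι (n : ℕ) : iter F n ⟶ colimit (chain F) := colimit.ι (chain F) n

lemma step_ι (n : ℕ) : step F n ≫ ι F (n + 1) = ι F n := by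
  rw [← chain_map_succ]
  exact colimit.w (chain F) _

lemma hom_ext {X : C} {f g : colimit (chain F) ⟶ X} (h : ∀ n, ι F n ≫ f = ι F n ≫ g) : f = g :=
  colimit.hom_ext h

variable {F} in
/-- The map `L ⟶ B` induced by the canonical maps `Fⁿ(0) ⟶ B`. -/
noncomputable def desc (B : Endofunctor.Algebra F) : colimit (chain F) ⟶ B.a :=
  colimit.desc (chain F) (coconeOfSucc (chain F) _ (leg B) fun n => by
    rw [chain_map_succ]
    exact step_leg B n)

variable {F} in
lemma ι_desc (B : Endofunctor.Algebra F) (n : ℕ) : ι F n ≫ desc B = leg B n :=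
  colimit.ι_desc _ n

variable [PreservesColimitsOfShape ℕ F]

lemma map_hom_ext {X : C} {f g : F.obj (colimit (chain F)) ⟶ X}
    (h : ∀ n, F.map (ι F n) ≫ f = F.map (ι F n) ≫ g) : f = g :=
  (isColimitOfPreserves F (colimit.isColimit (chain F))).hom_ext h

/-- The structure map `F L ⟶ L`, induced on colimits by the shift of the chain. -/
noncomputable def str : F.obj (colimit (chain F)) ⟶ colimit (chain F) :=
  (isColimitOfPreserves F (colimit.isColimit (chain F))).desc
    (coconeOfSucc (chain F ⋙ F) _ (fun n => ι F (n + 1)) fun n => by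
      rw [Functor.comp_map, chain_map_succ]
      exact step_ι F (n + 1))

lemma map_ι_str (n : ℕ) : F.map (ι F n) ≫ str F = ι F (n + 1) :=
  (isColimitOfPreserves F (colimit.isColimit (chain F))).fac _ n

lemma map_ι_str_comp {X : C} (g : colimit (chain F) ⟶ X) (n : ℕ) :
    F.map (ι F n) ≫ str F ≫ g = ι F (n + 1) ≫ g :=
  (Category.assoc _ _ _).symm.trans (congrArg (· ≫ g) (map_ι_str F n))

/-- The algebra carried by the colimit of the initial chain. -/
noncomputable def alg : Endofunctor.Algebra F := ⟨colimit (chain F), str F⟩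

variable {F}

/-- The map `desc B`, as a morphism of algebras. -/
noncomputable def algDesc (B : Endofunctor.Algebra F) : alg F ⟶ B where
  f := desc B
  h := by
    refine map_hom_ext F fun n => ?_
    change F.map (ι F n) ≫ F.map (desc B) ≫ B.str = F.map (ι F n) ≫ str F ≫ desc B
    rw [← Functor.map_comp_assoc, ι_desc, map_ι_str_comp]
    exact (ι_desc B (n + 1)).symm

/-- The components of an algebra morphism `L ⟶ B` satisfy the recursion defining `leg`. -/
lemma ι_hom (B : Endofunctor.Algebra F) (g : colimit (chain F) ⟶ B.a)
    (hg : F.map g ≫ B.str = str F ≫ g) (n : ℕ) : ι F n ≫ g = leg B n := by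
  induction n with
  | zero => exact iter_zero_hom_ext F _ _
  | succ n ih =>
    rw [← map_ι_str_comp, ← hg, ← Functor.map_comp_assoc, ih]
    rfl

variable (F) in
/-- The colimit of the initial chain is an initial algebra. -/
noncomputable def algIsInitial : IsInitial (alg F) :=
  IsInitial.ofUniqueHom algDesc fun B g =>
    Endofunctor.Algebra.Hom.ext (hom_ext F fun n => (ι_hom B g.f g.h n).trans (ι_desc B n).symm)

end Adamek

/-- Adámek's theorem: if `C` has an initial object and colimits of chains (diagrams of
shape `ℕ`), and `F : C ⥤ C` is an ω-cocontinuous endofunctor (it preserves colimits of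
chains), then the category of `F`-algebras has an initial object; moreover the structure
morphism of any such initial algebra is an isomorphism (Lambek's lemma). -/
theorem initial_algebra_exists (C : Type u) [Category.{v} C]
    [HasInitial C] [HasColimitsOfShape ℕ C] (F : C ⥤ C)
    (hF : Nonempty (PreservesColimitsOfShape ℕ F)) :
    HasInitial (Endofunctor.Algebra F) ∧
      ∀ (A : Endofunctor.Algebra F), IsInitial A → IsIso A.str := by
  obtain ⟨_⟩ := hF
  exact ⟨(Adamek.algIsInitial F).hasInitial,
    fun _ hA => Endofunctor.Algebra.Initial.str_isIso hA⟩
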